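/- For the Weierstrass zeta function of the lattice L_ω = ω·ℤ[τ] with invariants g₂ = 0, g₃ = 1, one has ζ(ω/6, L_ω) = π/(3√3·ω) − 1/√3 − √3/(∛2 − 2). -/

import Mathlib

noncomputable section

open Complex Real ComplexConjugate

/-- `τ = (−1+√−3)/2`, a primitive cube root of unity. -/
def tau : ℂ := (-1 + Real.sqrt 3 * Complex.I) / 2

/-- `√−3 = 1 + 2τ`, the square root of `−3` with positive imaginary part. -/
def sqrtm3 : ℂ := Real.sqrt 3 * Complex.I

/-- The ring of integers `O_K = ℤ[τ]` of `K = ℚ(√−3)`, as a subring of `ℂ`. -/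
def Eis : Subring ℂ := Subring.closure {tau}

/-- `τ` as an element of `ℤ[τ]`. -/
def tauO : Eis := ⟨tau, Subring.subset_closure rfl⟩

/-- `√−3` as an element of `ℤ[τ]`. -/
def sqrtm3O : Eis := 1 + 2 * tauO

/-- Membership in the lattice `L_ω = ω·ℤ[τ]`. -/
def inLattice (ω : ℝ) (z : ℂ) : Prop := ∃ a : Eis, z = (ω : ℂ) * a

/-- The Weierstrass `℘`-function of the lattice `L_ω = ω·ℤ[τ]`. -/
def wp (ω : ℝ) (z : ℂ) : ℂ :=
  1 / z ^ 2 + ∑' a : {w : ℂ // inLattice ω w ∧ w ≠ 0},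
    (1 / (z - (a : ℂ)) ^ 2 - 1 / (a : ℂ) ^ 2)

/-- The Weierstrass `ζ`-function of the lattice `L_ω = ω·ℤ[τ]`. -/
def wzeta (ω : ℝ) (z : ℂ) : ℂ :=
  1 / z + ∑' a : {w : ℂ // inLattice ω w ∧ w ≠ 0},
    (1 / (z - (a : ℂ)) + 1 / (a : ℂ) + z / (a : ℂ) ^ 2)

/-- The real cube root of 2, as a complex number. -/
def cbrt2 : ℂ := ((2 : ℝ) ^ ((1 : ℝ) / 3) : ℝ)

/-- The real cube root of 4, as a complex number. -/
def cbrt4 : ℂ := ((4 : ℝ) ^ ((1 : ℝ) / 3) : ℝ)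

/-!
The Weierstrass zeta function of a lattice is an odd primitive of `-℘` with quasi-periods `η`.
Liouville's theorem gives the Frobenius–Stickelberger relation
`(ζ(z + w) - ζ(z) - ζ(w))² = ℘(z) + ℘(w) + ℘(z + w)`, and differentiating it along `z + w = const`
gives the addition formula for `ζ`, which degenerates to a duplication formula on the diagonal.

If `ω` is a real period, these formulas express `ζ(ω/2)` and `ζ(ω/3)` through `η(ω)` and the values
of `℘` and `℘'` there. For `g₂ = 0` and `g₃ = 1` these are `℘(ω/2) = ∛2/2`, `℘'(ω/2) = 0`,
`℘(ω/3) = 1` and `℘'(ω/3) = -√3`, where the sign comes from `℘'' = 6℘² > 0` on the real axis.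
Since `ω/6 = ω/2 - ω/3`, the addition formula then gives `ζ(ω/6)` in terms of `η(ω)`.

Finally, `η(ω)/2` is the mean value of `ζ` over the side centred at `ω/2` of the hexagonal Voronoi
cell of `ω · ℤ[τ]`. Rotation by `1 + τ` leaves the primitive of `ζ(z) - 1/z` invariant and carries
one end of this side to the other, so only the variation `iπ/3` of `log z` contributes.
-/

section

open Filter Topology
open scoped PeriodPair

section Lattice

variable (L : PeriodPair)

lemma eventually_notMem_lattice (x : ℂ) : ∀ᶠ z in 𝓝[≠] x, z ∉ L.lattice := by
  filter_upwards [self_mem_nhdsWithin, mem_nhdsWithin_of_mem_nhds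
    (L.compl_lattice_sdiff_singleton_mem_nhds x)] with z hzx hz hzL
  exact hz ⟨hzL, hzx⟩

lemma eventually_add_notMem_lattice (w x : ℂ) : ∀ᶠ z in 𝓝[≠] x, z + w ∉ L.lattice :=
  (eventually_notMem_lattice L (x + w)).filter_mono
    ((Homeomorph.addRight w).map_punctured_nhds_eq x).le

lemma isPreconnected_compl_lattice : IsPreconnected (L.lattice : Set ℂ)ᶜ :=
  have hL : (L.lattice : Set ℂ).Countable :=
    Set.countable_coe_iff.mp (inferInstanceAs (Countable L.lattice))
  (hL.isConnected_compl_of_one_lt_rank (by simp)).isPreconnected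

variable {L}

lemma compl_lattice_mem_nhds {z : ℂ} (hz : z ∉ L.lattice) : (L.lattice : Set ℂ)ᶜ ∈ 𝓝 z :=
  L.isClosed_lattice.isOpen_compl.mem_nhds hz

lemma tsum_lattice_comp (σ : ℂ ≃ ℂ) (hσ : ∀ l, σ l ∈ L.lattice ↔ l ∈ L.lattice) (f : ℂ → ℂ) :
    ∑' l : L.lattice, f (σ l) = ∑' l : L.lattice, f l :=
  (σ.subtypeEquiv fun l ↦ (hσ l).symm).tsum_eq fun l : L.lattice ↦ f l

lemma hasDerivAt_weierstrassP {z : ℂ} (hz : z ∉ L.lattice) : HasDerivAt ℘[L] (℘'[L] z) z := by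
  rw [← L.deriv_weierstrassP]
  exact (L.analyticOnNhd_weierstrassP z hz).differentiableAt.hasDerivAt

lemma not_forall_derivWeierstrassP_eq_zero : ¬ ∀ z ∈ (L.lattice : Set ℂ)ᶜ, ℘'[L] z = 0 := by
  intro h
  obtain ⟨c, hc⟩ := L.isClosed_lattice.isOpen_compl.exists_is_const_of_deriv_eq_zero
    (isPreconnected_compl_lattice L) L.differentiableOn_weierstrassP
    (fun z hz ↦ by rw [L.deriv_weierstrassP]; exact h z hz)
  have hconst : ℘[L] =ᶠ[𝓝[≠] 0] fun _ ↦ c :=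
    (eventually_notMem_lattice L 0).mono fun z hz ↦ hc z hz
  have horder := (analyticAt_const (𝕜 := ℂ) (v := c) (x := (0 : ℂ))).meromorphicOrderAt_nonneg
  rw [← meromorphicOrderAt_congr hconst, L.order_weierstrassP 0 (zero_mem _)] at horder
  exact absurd horder (by decide)

lemma hasDerivAt_derivWeierstrassP {z : ℂ} (hz : z ∉ L.lattice) :
    HasDerivAt ℘'[L] (6 * ℘[L] z ^ 2 - L.g₂ / 2) z := by
  have hP := L.analyticOnNhd_weierstrassP
  have hP' := L.analyticOnNhd_derivWeierstrassP
  have hderiv : ∀ x ∉ L.lattice, HasDerivAt ℘'[L] (deriv ℘'[L] x) x := fun x hx ↦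
    (hP' x hx).differentiableAt.hasDerivAt
  have hmul : ∀ x ∈ (L.lattice : Set ℂ)ᶜ,
      ℘'[L] x * (deriv ℘'[L] x - (6 * ℘[L] x ^ 2 - L.g₂ / 2)) = 0 := fun x hx ↦ by
    have hx' := hasDerivAt_weierstrassP hx
    have hrhs := (((hx'.pow 3).const_mul 4).sub (hx'.const_mul L.g₂)).sub_const L.g₃
    have hsq := ((hderiv x hx).pow 2).unique <| hrhs.congr_of_eventuallyEq <|
      eventually_of_mem (compl_lattice_mem_nhds hx) L.derivWeierstrassP_sq
    simp only [Nat.cast_ofNat, Nat.add_one_sub_one, pow_one] at hsq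
    linear_combination hsq / 2
  have hfactor : AnalyticOnNhd ℂ (fun x ↦ deriv ℘'[L] x - (6 * ℘[L] x ^ 2 - L.g₂ / 2))
      (L.lattice : Set ℂ)ᶜ := fun x hx ↦ by
    have hPx := hP x hx
    have hP'x := (hP' x hx).deriv
    fun_prop
  have h := (hP'.eq_zero_or_eq_zero_of_mul_eq_zero hfactor hmul
    (isPreconnected_compl_lattice L)).resolve_left not_forall_derivWeierstrassP_eq_zero z hz
  exact sub_eq_zero.mp h ▸ hderiv z hz

lemma G_eq_zero_of_pow_ne_one {e : ℂ} (he0 : e ≠ 0) (he : ∀ l, e * l ∈ L.lattice ↔ l ∈ L.lattice)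
    {n : ℕ} (hn : e ^ n ≠ 1) : L.G n = 0 := by
  have h : (e ^ n)⁻¹ * L.G n = L.G n := by
    rw [PeriodPair.G, ← tsum_mul_left,
      ← tsum_lattice_comp (Equiv.mulLeft₀ e he0) he fun l ↦ (l ^ n)⁻¹]
    simp only [Equiv.mulLeft₀_apply, mul_pow, mul_inv]
  exact (mul_left_eq_self₀.mp h).resolve_left (inv_ne_one.mpr hn)

lemma weierstrassP_conj (hL : ∀ l, conj l ∈ L.lattice ↔ l ∈ L.lattice) (z : ℂ) :
    ℘[L] (conj z) = conj (℘[L] z) := by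
  simp only [PeriodPair.weierstrassP, Complex.conj_tsum]
  rw [← tsum_lattice_comp conjAe.toEquiv hL fun l ↦ 1 / (conj z - l) ^ 2 - 1 / l ^ 2]
  simp

lemma derivWeierstrassP_conj (hL : ∀ l, conj l ∈ L.lattice ↔ l ∈ L.lattice) (z : ℂ) :
    ℘'[L] (conj z) = conj (℘'[L] z) := by
  have hfun : conj ∘ ℘[L] ∘ conj = ℘[L] := funext fun x ↦ by simp [weierstrassP_conj hL]
  simpa [hfun] using congrFun (deriv_conj_conj (f := ℘[L])) (conj z)

/-! ### The Weierstrass zeta function -/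

variable (L) in
/-- The regular part at the origin of the Weierstrass zeta function of `L`, that is `ζ(z) - 1/z`. -/
def weierstrassZetaReg (z : ℂ) : ℂ :=
  ∑' l : L.lattice, if (l : ℂ) = 0 then 0 else (1 / (z - l) + 1 / l + z / l ^ 2)

variable (L) in
/-- The Weierstrass zeta function of the lattice spanned by `L`: the odd meromorphic primitive of
`-℘`. At a lattice point the polar term contributes `1 / 0 = 0`. -/
def weierstrassZeta (z : ℂ) : ℂ := 1 / z + weierstrassZetaReg L z

lemma weierstrassZeta_summand_bound {r : ℝ} {z l : ℂ} (hz : ‖z‖ < r) (hl : 2 * r ≤ ‖l‖) :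
    ‖1 / (z - l) + 1 / l + z / l ^ 2‖ ≤ 2 * r ^ 2 * ‖l‖ ^ (-3 : ℝ) := by
  have hr : 0 < r := (norm_nonneg z).trans_lt hz
  have hl0 : l ≠ 0 := norm_pos_iff.mp (by linarith)
  have hdist : ‖l‖ / 2 ≤ ‖z - l‖ := by
    rw [norm_sub_rev]
    exact .trans (by linarith) (norm_sub_norm_le l z)
  have hzl : z - l ≠ 0 := norm_pos_iff.mp (by linarith)
  calc ‖1 / (z - l) + 1 / l + z / l ^ 2‖ = ‖z ^ 2 / ((z - l) * l ^ 2)‖ := by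
        congr 1
        field_simp
        ring
    _ = ‖z‖ ^ 2 / (‖z - l‖ * ‖l‖ ^ 2) := by simp only [norm_div, norm_mul, norm_pow]
    _ ≤ r ^ 2 / (‖l‖ / 2 * ‖l‖ ^ 2) := by gcongr
    _ = 2 * r ^ 2 / ‖l‖ ^ 3 := by field_simp
    _ = 2 * r ^ 2 * ‖l‖ ^ (-3 : ℝ) := by norm_cast

variable (L) in
lemma hasSumLocallyUniformly_weierstrassZetaReg :
    HasSumLocallyUniformly (fun (l : L.lattice) (z : ℂ) ↦
      if (l : ℂ) = 0 then 0 else (1 / (z - l) + 1 / l + z / l ^ 2)) (weierstrassZetaReg L) := by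
  have hrank : (-3 : ℝ) < -Module.finrank ℤ L.lattice := by
    rw [L.finrank_lattice]
    norm_num
  refine L.hasSumLocallyUniformly_aux (u := fun r l ↦ 2 * r ^ 2 * ‖l‖ ^ (-3 : ℝ)) _
    (fun _ _ ↦ (ZLattice.summable_norm_rpow _ _ hrank).mul_left _) fun r hr ↦
    eventually_atTop.mpr ⟨2 * r, ?_⟩
  rintro _ h z hz l rfl
  split_ifs
  · rw [norm_zero]
    positivity
  · exact weierstrassZeta_summand_bound hz h

lemma hasDerivAt_weierstrassZetaReg {z : ℂ} (hz : z ∈ ((L.lattice : Set ℂ) \ {0})ᶜ) :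
    HasDerivAt (weierstrassZetaReg L) (-L.weierstrassPExcept 0 z) z := by
  refine hasDerivAt_of_tendstoLocallyUniformlyOn L.isOpen_compl_lattice_sdiff
    (L.hasSumLocallyUniformly_weierstrassPExcept 0).tendstoLocallyUniformlyOn.fun_neg
    (.of_forall fun s x hx ↦ ?_)
    (fun x _ ↦ (hasSumLocallyUniformly_weierstrassZetaReg L).hasSum (x := x)) hz
  rw [← Finset.sum_neg_distrib]
  refine HasDerivAt.fun_sum fun l _ ↦ ?_
  beta_reduce
  split_ifs with hl
  · simpa using hasDerivAt_const x (0 : ℂ)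
  · have hxl : x - l ≠ 0 := sub_ne_zero.mpr fun h ↦ hx (by simp [h, hl])
    simp only [one_div]
    refine (((((hasDerivAt_id' x).sub_const (l : ℂ)).fun_inv hxl).add_const (l : ℂ)⁻¹).fun_add
      ((hasDerivAt_id' x).div_const ((l : ℂ) ^ 2))).congr_deriv ?_
    ring

variable (L) in
lemma weierstrassP_eq_weierstrassPExcept_zero_add (z : ℂ) :
    ℘[L] z = L.weierstrassPExcept 0 z + 1 / z ^ 2 := by
  simpa using (L.weierstrassPExcept_add 0 z).symm

lemma hasDerivAt_weierstrassZeta {z : ℂ} (hz : z ∉ L.lattice) :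
    HasDerivAt (weierstrassZeta L) (-℘[L] z) z := by
  have hz0 : z ≠ 0 := ne_of_mem_of_not_mem (zero_mem _) hz |>.symm
  have h := (hasDerivAt_inv hz0).add (hasDerivAt_weierstrassZetaReg (fun h ↦ hz h.1))
  refine (h.congr_of_eventuallyEq (.of_forall fun x ↦ by simp [weierstrassZeta])).congr_deriv ?_
  rw [weierstrassP_eq_weierstrassPExcept_zero_add]
  ring

variable (L) in
lemma weierstrassZetaReg_zero : weierstrassZetaReg L 0 = 0 := by simp [weierstrassZetaReg]

lemma weierstrassZetaReg_mul {e : ℂ} (he0 : e ≠ 0) (he : ∀ l, e * l ∈ L.lattice ↔ l ∈ L.lattice)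
    (z : ℂ) : weierstrassZetaReg L (e * z) = e⁻¹ * weierstrassZetaReg L z := by
  rw [weierstrassZetaReg, weierstrassZetaReg, ← tsum_mul_left, ← tsum_lattice_comp
    (Equiv.mulLeft₀ e he0) he fun l ↦ if l = 0 then 0 else 1 / (e * z - l) + 1 / l + e * z / l ^ 2]
  congr with l
  simp only [Equiv.mulLeft₀_apply, mul_eq_zero, he0, false_or, mul_ite, mul_zero, ← mul_sub]
  split_ifs
  · rfl
  · field_simp

lemma weierstrassZeta_mul {e : ℂ} (he0 : e ≠ 0) (he : ∀ l, e * l ∈ L.lattice ↔ l ∈ L.lattice)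
    (z : ℂ) : weierstrassZeta L (e * z) = e⁻¹ * weierstrassZeta L z := by
  rw [weierstrassZeta, weierstrassZeta, weierstrassZetaReg_mul he0 he]
  field_simp

variable (L) in
lemma weierstrassZeta_neg (z : ℂ) : weierstrassZeta L (-z) = -weierstrassZeta L z := by
  simpa [inv_neg] using weierstrassZeta_mul (L := L) (e := -1) (by norm_num) (by simp) z

lemma add_mem_lattice_iff {l : ℂ} (hl : l ∈ L.lattice) (z : ℂ) :
    z + l ∈ L.lattice ↔ z ∈ L.lattice :=
  L.lattice.add_mem_iff_left hl

variable (L) in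
/-- The quasi-period `η(l)` of the Weierstrass zeta function attached to a period `l`. It is the
increment of `ζ` from the half-period `ω₁ / 2`, an arbitrary base point outside the lattice. -/
def quasiPeriod (l : ℂ) : ℂ := weierstrassZeta L (L.ω₁ / 2 + l) - weierstrassZeta L (L.ω₁ / 2)

lemma weierstrassZeta_add {l : ℂ} (hl : l ∈ L.lattice) {z : ℂ} (hz : z ∉ L.lattice) :
    weierstrassZeta L (z + l) = weierstrassZeta L z + quasiPeriod L l := by
  have hderiv : ∀ x ∉ L.lattice,
      HasDerivAt (fun x ↦ weierstrassZeta L (x + l) - weierstrassZeta L x) 0 x := fun x hx ↦ by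
    have hxl := (add_mem_lattice_iff hl x).not.mpr hx
    refine (((hasDerivAt_weierstrassZeta hxl).comp_add_const x l).sub
      (hasDerivAt_weierstrassZeta hx)).congr_deriv ?_
    rw [L.periodic_weierstrassP ⟨l, hl⟩ x, sub_self]
  obtain ⟨c, hc⟩ := L.isClosed_lattice.isOpen_compl.exists_is_const_of_deriv_eq_zero
    (isPreconnected_compl_lattice L)
    (fun x hx ↦ (hderiv x hx).differentiableAt.differentiableWithinAt)
    (fun x hx ↦ (hderiv x hx).deriv)
  rw [quasiPeriod, hc _ L.ω₁_div_two_notMem_lattice, ← hc z hz]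
  ring

/-! ### The Frobenius–Stickelberger relation and the addition formula -/

lemma eq_zero_of_periodic_of_tendsto_zero {f : ℂ → ℂ} {S : Set ℂ} (hne : S.Nonempty)
    (hS : ∀ x, ∀ᶠ z in 𝓝[≠] x, z ∉ S) (hSL : ∀ l ∈ L.lattice, ∀ z, z + l ∈ S ↔ z ∈ S)
    (hper : ∀ l ∈ L.lattice, ∀ z ∉ S, f (z + l) = f z) (hf : ∀ z ∉ S, DifferentiableAt ℂ f z)
    (hlim : ∀ s ∈ S, Tendsto f (𝓝[≠] s) (𝓝 0)) {z : ℂ} (hz : z ∉ S) : f z = 0 := by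
  let g : ℂ → ℂ := Sᶜ.indicator f
  have hgS : ∀ x ∈ S, g x = 0 := fun x hx ↦ Set.indicator_of_notMem (by simpa using hx) f
  have hgf : ∀ x ∉ S, g x = f x := fun x hx ↦ Set.indicator_of_mem hx f
  have hdiff_compl : ∀ x ∉ S, DifferentiableAt ℂ g x := fun x hx ↦ by
    have hnear : ∀ᶠ y in 𝓝 x, y ∉ S := by
      rw [← nhdsNE_sup_pure x, eventually_sup, eventually_pure]
      exact ⟨hS x, hx⟩
    exact (hf x hx).congr_of_eventuallyEq (hnear.mono hgf)
  have hdiff : Differentiable ℂ g := fun x ↦ by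
    by_cases hx : x ∈ S
    · refine (Complex.analyticAt_of_differentiable_on_punctured_nhds_of_continuousAt
        ((hS x).mono hdiff_compl) ?_).differentiableAt
      rw [continuousAt_iff_punctured_nhds, hgS x hx]
      exact (hlim x hx).congr' ((hS x).mono fun y hy ↦ (hgf y hy).symm)
    · exact hdiff_compl x hx
  have hgper : ∀ x, ∀ l ∈ L.lattice, g (x + l) = g x := fun x l hl ↦ by
    by_cases hx : x ∈ S
    · rw [hgS x hx, hgS _ ((hSL l hl x).mpr hx)]
    · rw [hgf x hx, hgf _ ((hSL l hl x).not.mpr hx), hper l hl x hx]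
  have hbdd := (IsZLattice.isCompact_range_of_periodic L.lattice g hdiff.continuous hgper).isBounded
  obtain ⟨s, hs⟩ := hne
  rw [← hgf z hz, hdiff.apply_eq_apply_of_bounded hbdd z s, hgS s hs]

variable (L) in
/-- The difference of the two sides of the Frobenius–Stickelberger relation
`(ζ(z + w) - ζ(z) - ζ(w))² = ℘(z) + ℘(w) + ℘(z + w)`, as a function of `z`. -/
def frobeniusStickelbergerDefect (w z : ℂ) : ℂ :=
  (weierstrassZeta L (z + w) - weierstrassZeta L z - weierstrassZeta L w) ^ 2 -
    (℘[L] z + ℘[L] w + ℘[L] (z + w))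

lemma frobeniusStickelbergerDefect_add_period {l w z : ℂ} (hl : l ∈ L.lattice)
    (hz : z ∉ L.lattice) (hzw : z + w ∉ L.lattice) :
    frobeniusStickelbergerDefect L w (z + l) = frobeniusStickelbergerDefect L w z := by
  have hP : ∀ x, ℘[L] (x + l) = ℘[L] x := L.periodic_weierstrassP ⟨l, hl⟩
  rw [frobeniusStickelbergerDefect, frobeniusStickelbergerDefect, add_right_comm,
    weierstrassZeta_add hl hz, weierstrassZeta_add hl hzw, hP, hP]
  ring

variable (L) in
lemma frobeniusStickelbergerDefect_neg_sub (w z : ℂ) :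
    frobeniusStickelbergerDefect L w (-w - z) = frobeniusStickelbergerDefect L w z := by
  have hneg : -w - z = -(z + w) := by ring
  have hneg' : -w - z + w = -z := by ring
  rw [frobeniusStickelbergerDefect, frobeniusStickelbergerDefect, hneg', hneg, weierstrassZeta_neg,
    weierstrassZeta_neg, L.weierstrassP_neg, L.weierstrassP_neg]
  ring

lemma differentiableAt_frobeniusStickelbergerDefect {w z : ℂ} (hz : z ∉ L.lattice)
    (hzw : z + w ∉ L.lattice) : DifferentiableAt ℂ (frobeniusStickelbergerDefect L w) z := by
  have hζ := (hasDerivAt_weierstrassZeta hz).differentiableAt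
  have hζw := ((hasDerivAt_weierstrassZeta hzw).comp_add_const z w).differentiableAt
  have hP := (hasDerivAt_weierstrassP hz).differentiableAt
  have hPw := ((hasDerivAt_weierstrassP hzw).comp_add_const z w).differentiableAt
  unfold frobeniusStickelbergerDefect
  fun_prop

lemma tendsto_frobeniusStickelbergerDefect_zero {w : ℂ} (hw : w ∉ L.lattice) :
    Tendsto (frobeniusStickelbergerDefect L w) (𝓝[≠] 0) (𝓝 0) := by
  have hw0 : 0 + w ∉ L.lattice := by rwa [zero_add]
  let k : ℂ → ℂ := fun z ↦ weierstrassZeta L (z + w) - weierstrassZeta L w - weierstrassZetaReg L z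
  have hk0 : k 0 = 0 := by simp [k, weierstrassZetaReg_zero]
  have hk : HasDerivAt k (-℘[L] w) 0 :=
    ((((hasDerivAt_weierstrassZeta hw0).comp_add_const 0 w).sub_const _).fun_sub
      (hasDerivAt_weierstrassZetaReg (by simp))).congr_deriv (by simp)
  have hk_lim : Tendsto k (𝓝[≠] 0) (𝓝 0) := by
    simpa only [hk0] using hk.continuousAt.tendsto.mono_left nhdsWithin_le_nhds
  have hk_slope : Tendsto (fun z ↦ k z / z) (𝓝[≠] 0) (𝓝 (-℘[L] w)) :=
    hk.tendsto_slope.congr fun z ↦ by simp [slope, hk0, div_eq_inv_mul]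
  have hreg : Tendsto (L.weierstrassPExcept 0) (𝓝[≠] 0) (𝓝 0) := by
    have h := ((L.analyticAt_weierstrassPExcept 0).continuousAt).tendsto
    rw [L.weierstrassPExcept_zero] at h
    exact h.mono_left nhdsWithin_le_nhds
  have hP : Tendsto (fun z ↦ ℘[L] (z + w)) (𝓝[≠] 0) (𝓝 (℘[L] w)) := by
    have h := ((hasDerivAt_weierstrassP hw0).comp_add_const 0 w).continuousAt.tendsto
    rw [zero_add] at h
    exact h.mono_left nhdsWithin_le_nhds
  -- `ζ(z + w) - ζ(z) - ζ(w) = k(z) - 1/z`, so the double pole of the square cancels that of `℘`.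
  have hexpand : (fun z ↦ k z ^ 2 - 2 * (k z / z) - L.weierstrassPExcept 0 z - ℘[L] w -
      ℘[L] (z + w)) =ᶠ[𝓝[≠] 0] frobeniusStickelbergerDefect L w := by
    filter_upwards [self_mem_nhdsWithin] with z (hz : z ≠ 0)
    simp only [frobeniusStickelbergerDefect, weierstrassP_eq_weierstrassPExcept_zero_add L z, k,
      weierstrassZeta]
    field_simp
    ring
  have hlim := ((((hk_lim.pow 2).sub (hk_slope.const_mul 2)).sub hreg).sub_const (℘[L] w)).sub hP
  convert hlim.congr' hexpand using 2
  ring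

lemma tendsto_frobeniusStickelbergerDefect_of_mem {w s : ℂ} (hw : w ∉ L.lattice)
    (hs : s ∈ L.lattice) : Tendsto (frobeniusStickelbergerDefect L w) (𝓝[≠] s) (𝓝 0) := by
  have hshift : Tendsto (· - s) (𝓝[≠] s) (𝓝[≠] 0) := by
    have h : Tendsto (· - s) (𝓝[≠] s) (𝓝[≠] (s - s)) :=
      ((Homeomorph.subRight s).map_punctured_nhds_eq s).le
    rwa [sub_self] at h
  refine ((tendsto_frobeniusStickelbergerDefect_zero hw).comp hshift).congr' ?_
  filter_upwards [eventually_notMem_lattice L s, eventually_add_notMem_lattice L w s] with z hz hzw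
  simpa only [Function.comp_apply, sub_eq_add_neg] using
    frobeniusStickelbergerDefect_add_period (neg_mem hs) hz hzw

/-- The Frobenius–Stickelberger relation. -/
lemma weierstrassZeta_add_sub_sub_sq {w z : ℂ} (hw : w ∉ L.lattice) (hz : z ∉ L.lattice)
    (hzw : z + w ∉ L.lattice) :
    (weierstrassZeta L (z + w) - weierstrassZeta L z - weierstrassZeta L w) ^ 2 =
      ℘[L] z + ℘[L] w + ℘[L] (z + w) := by
  refine sub_eq_zero.mp (eq_zero_of_periodic_of_tendsto_zero (L := L)
    (f := frobeniusStickelbergerDefect L w) (S := {x | x ∈ L.lattice ∨ x + w ∈ L.lattice})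
    ⟨0, .inl (zero_mem _)⟩ (fun x ↦ ?_) (fun l hl x ↦ ?_) (fun l hl x hx ↦ ?_)
    (fun x hx ↦ ?_) ?_ (z := z) (not_or.mpr ⟨hz, hzw⟩))
  · filter_upwards [eventually_notMem_lattice L x, eventually_add_notMem_lattice L w x]
      with y hy hyw using not_or.mpr ⟨hy, hyw⟩
  · simp only [Set.mem_ofPred_eq, add_right_comm x l w, add_mem_lattice_iff hl]
  · exact frobeniusStickelbergerDefect_add_period hl (not_or.mp hx).1 (not_or.mp hx).2
  · exact differentiableAt_frobeniusStickelbergerDefect (not_or.mp hx).1 (not_or.mp hx).2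
  · rintro s (hs | hsw)
    · exact tendsto_frobeniusStickelbergerDefect_of_mem hw hs
    · have hreflect : Tendsto (-w - ·) (𝓝[≠] s) (𝓝[≠] (-w - s)) :=
        ((Homeomorph.subLeft (-w)).map_punctured_nhds_eq s).le
      have hmem : -w - s ∈ L.lattice := by
        rw [show -w - s = -(s + w) by ring]
        exact neg_mem hsw
      exact ((tendsto_frobeniusStickelbergerDefect_of_mem hw hmem).comp hreflect).congr
        (frobeniusStickelbergerDefect_neg_sub L w)

lemma weierstrassZeta_addition {w z : ℂ} (hw : w ∉ L.lattice) (hz : z ∉ L.lattice)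
    (hzw : z + w ∉ L.lattice) :
    2 * (weierstrassZeta L (z + w) - weierstrassZeta L z - weierstrassZeta L w) *
      (℘[L] z - ℘[L] w) = ℘'[L] z - ℘'[L] w := by
  obtain ⟨s, rfl⟩ : ∃ s, w = s - z := ⟨z + w, by ring⟩
  rw [add_sub_cancel] at hzw ⊢
  -- Differentiate the Frobenius–Stickelberger relation in `z`, keeping the sum `s` fixed.
  have hlhs := (((hasDerivAt_weierstrassZeta hz).const_sub (weierstrassZeta L s)).sub
    ((hasDerivAt_weierstrassZeta hw).comp_const_sub s z)).pow 2
  have hrhs := ((hasDerivAt_weierstrassP hz).add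
    ((hasDerivAt_weierstrassP hw).comp_const_sub s z)).add_const (℘[L] s)
  have hsub : ∀ᶠ x in 𝓝 z, s - x ∈ (L.lattice : Set ℂ)ᶜ :=
    (continuous_sub_left s).continuousAt.eventually (compl_lattice_mem_nhds hw)
  have h := hlhs.unique <| hrhs.congr_of_eventuallyEq <| by
    filter_upwards [compl_lattice_mem_nhds hz, hsub] with x hx hsx
    simpa using weierstrassZeta_add_sub_sub_sq hsx hx (by rwa [add_sub_cancel])
  simp only [Pi.sub_apply, Nat.cast_ofNat, Nat.add_one_sub_one, pow_one] at h
  linear_combination h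

lemma weierstrassZeta_subtraction {w z : ℂ} (hw : w ∉ L.lattice) (hz : z ∉ L.lattice)
    (hzw : z - w ∉ L.lattice) :
    2 * (weierstrassZeta L (z - w) - weierstrassZeta L z + weierstrassZeta L w) *
      (℘[L] z - ℘[L] w) = ℘'[L] z + ℘'[L] w := by
  have h := weierstrassZeta_addition (neg_mem_iff.not.mpr hw) hz (by rwa [← sub_eq_add_neg])
  rwa [weierstrassZeta_neg, L.weierstrassP_neg, L.derivWeierstrassP_neg, ← sub_eq_add_neg,
    sub_neg_eq_add, sub_neg_eq_add] at h

lemma weierstrassZeta_duplication {z : ℂ} (hz : z ∉ L.lattice) (h2z : 2 * z ∉ L.lattice) :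
    2 * (weierstrassZeta L (2 * z) - 2 * weierstrassZeta L z) * ℘'[L] z =
      6 * ℘[L] z ^ 2 - L.g₂ / 2 := by
  rw [two_mul z] at h2z ⊢
  -- Differentiate the addition formula at `(x, z)` in `x`, at `x = z`.
  have hζ := ((((hasDerivAt_weierstrassZeta h2z).comp_add_const z z).sub
    (hasDerivAt_weierstrassZeta hz)).sub_const (weierstrassZeta L z)).const_mul 2
  have hlhs := hζ.mul ((hasDerivAt_weierstrassP hz).sub_const (℘[L] z))
  have hrhs := (hasDerivAt_derivWeierstrassP hz).sub_const (℘'[L] z)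
  have hadd : ∀ᶠ x in 𝓝 z, x + z ∈ (L.lattice : Set ℂ)ᶜ :=
    (continuous_add_const z).continuousAt.eventually (compl_lattice_mem_nhds h2z)
  have h := hlhs.unique <| hrhs.congr_of_eventuallyEq <| by
    filter_upwards [compl_lattice_mem_nhds hz, hadd] with x hx hxz
    simpa using weierstrassZeta_addition hz hx hxz
  simp only [Pi.sub_apply, sub_self, mul_zero, zero_add] at h
  linear_combination h

/-! ### Torsion points -/

lemma weierstrassZeta_of_two_mul_mem {z : ℂ} (hz : z ∉ L.lattice) (h2z : 2 * z ∈ L.lattice) :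
    2 * weierstrassZeta L z = quasiPeriod L (2 * z) := by
  have h := weierstrassZeta_add h2z (neg_mem_iff.not.mpr hz)
  rw [weierstrassZeta_neg, show -z + 2 * z = z by ring] at h
  linear_combination h

lemma derivWeierstrassP_of_two_mul_mem {z : ℂ} (h2z : 2 * z ∈ L.lattice) : ℘'[L] z = 0 := by
  have h : ℘'[L] (-z + 2 * z) = ℘'[L] (-z) := L.periodic_derivWeierstrassP ⟨2 * z, h2z⟩ (-z)
  rw [L.derivWeierstrassP_neg, show -z + 2 * z = z by ring] at h
  linear_combination h / 2

section ThreeTorsion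

variable {z : ℂ}

lemma two_mul_notMem_of_three_mul_mem (hz : z ∉ L.lattice) (h3z : 3 * z ∈ L.lattice) :
    2 * z ∉ L.lattice := fun h2z ↦ hz <| by
  rw [show z = 3 * z - 2 * z by ring]
  exact sub_mem h3z h2z

lemma weierstrassZeta_two_mul_of_three_mul_mem (hz : z ∉ L.lattice) (h3z : 3 * z ∈ L.lattice) :
    weierstrassZeta L (2 * z) = quasiPeriod L (3 * z) - weierstrassZeta L z := by
  have h := weierstrassZeta_add h3z (neg_mem_iff.not.mpr hz)
  rw [weierstrassZeta_neg, show -z + 3 * z = 2 * z by ring] at h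
  linear_combination h

lemma sq_quasiPeriod_sub_of_three_mul_mem (hz : z ∉ L.lattice) (h3z : 3 * z ∈ L.lattice) :
    (quasiPeriod L (3 * z) - 3 * weierstrassZeta L z) ^ 2 = 3 * ℘[L] z := by
  have h2z := two_mul_notMem_of_three_mul_mem hz h3z
  have hP : ℘[L] (2 * z) = ℘[L] z := by
    rw [show 2 * z = -z + 3 * z by ring, ← L.weierstrassP_neg z]
    exact L.periodic_weierstrassP ⟨3 * z, h3z⟩ (-z)
  have hFS := weierstrassZeta_add_sub_sub_sq hz hz (by rwa [← two_mul])
  rw [← two_mul, hP, weierstrassZeta_two_mul_of_three_mul_mem hz h3z] at hFS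
  linear_combination hFS

lemma quasiPeriod_sub_mul_derivWeierstrassP_of_three_mul_mem (hz : z ∉ L.lattice)
    (h3z : 3 * z ∈ L.lattice) :
    2 * (quasiPeriod L (3 * z) - 3 * weierstrassZeta L z) * ℘'[L] z =
      6 * ℘[L] z ^ 2 - L.g₂ / 2 := by
  rw [← weierstrassZeta_duplication hz (two_mul_notMem_of_three_mul_mem hz h3z),
    weierstrassZeta_two_mul_of_three_mul_mem hz h3z]
  ring

lemma weierstrassP_mul_of_three_mul_mem (hz : z ∉ L.lattice) (h3z : 3 * z ∈ L.lattice)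
    (hg₂ : L.g₂ = 0) :
    ℘[L] z * (℘[L] z ^ 3 - L.g₃) = 0 := by
  have hsq := sq_quasiPeriod_sub_of_three_mul_mem hz h3z
  have hmul := quasiPeriod_sub_mul_derivWeierstrassP_of_three_mul_mem hz h3z
  have hODE := L.derivWeierstrassP_sq z hz
  rw [hg₂] at hmul hODE
  linear_combination
    (2 * (quasiPeriod L (3 * z) - 3 * weierstrassZeta L z) * ℘'[L] z + 6 * ℘[L] z ^ 2) / 12 * hmul
      - ℘'[L] z ^ 2 / 3 * hsq - ℘[L] z * hODE

end ThreeTorsion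

/-! ### Real lattices -/

lemma weierstrassP_ofReal_re (hL : ∀ l, conj l ∈ L.lattice ↔ l ∈ L.lattice) (x : ℝ) :
    ((℘[L] x).re : ℂ) = ℘[L] x :=
  conj_eq_iff_re.mp (by rw [← weierstrassP_conj hL, conj_ofReal])

lemma derivWeierstrassP_ofReal_re (hL : ∀ l, conj l ∈ L.lattice ↔ l ∈ L.lattice) (x : ℝ) :
    ((℘'[L] x).re : ℂ) = ℘'[L] x :=
  conj_eq_iff_re.mp (by rw [← derivWeierstrassP_conj hL, conj_ofReal])

lemma weierstrassP_ofReal_re_pos (hL : ∀ l, conj l ∈ L.lattice ↔ l ∈ L.lattice)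
    (hg₂ : L.g₂ = 0) (hg₃ : 0 < L.g₃.re) {x : ℝ} (hx : (x : ℂ) ∉ L.lattice) :
    0 < (℘[L] x).re := by
  have hODE := L.derivWeierstrassP_sq x hx
  rw [hg₂, ← weierstrassP_ofReal_re hL, ← derivWeierstrassP_ofReal_re hL] at hODE
  have hreal : (℘'[L] x).re ^ 2 = 4 * (℘[L] x).re ^ 3 - L.g₃.re := by
    have h := congrArg Complex.re hODE
    rw [zero_mul, sub_zero] at h
    norm_cast at h
  exact Odd.pow_pos_iff (n := 3) (by decide) |>.mp (by linarith [sq_nonneg (℘'[L] x).re])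

lemma strictMonoOn_derivWeierstrassP_re (hL : ∀ l, conj l ∈ L.lattice ↔ l ∈ L.lattice)
    (hg₂ : L.g₂ = 0) (hg₃ : 0 < L.g₃.re) {a b : ℝ} (hab : ∀ x ∈ Set.Icc a b, (x : ℂ) ∉ L.lattice) :
    StrictMonoOn (fun x : ℝ ↦ (℘'[L] x).re) (Set.Icc a b) := by
  have hderiv : ∀ x ∈ Set.Icc a b,
      HasDerivAt (fun x : ℝ ↦ (℘'[L] x).re) (6 * (℘[L] x).re ^ 2) x := fun x hx ↦ by
    refine (hasDerivAt_derivWeierstrassP (hab x hx)).real_of_complex.congr_deriv ?_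
    rw [hg₂, zero_div, sub_zero, ← weierstrassP_ofReal_re hL]
    norm_cast
  refine strictMonoOn_of_deriv_pos (convex_Icc a b)
    (fun x hx ↦ (hderiv x hx).continuousAt.continuousWithinAt) fun x hx ↦ ?_
  have hx' := interior_subset hx
  rw [(hderiv x hx').deriv]
  have hpos := weierstrassP_ofReal_re_pos hL hg₂ hg₃ (hab x hx')
  positivity

lemma ofReal_sqrt_three_sq : (√3 : ℂ) ^ 2 = 3 := by
  rw [← ofReal_pow, Real.sq_sqrt zero_le_three, ofReal_ofNat]

lemma two_rpow_one_third_pow_three : ((2 : ℝ) ^ ((1 : ℝ) / 3)) ^ 3 = 2 := by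
  rw [one_div]
  exact Real.rpow_inv_natCast_pow zero_le_two three_ne_zero

lemma cbrt2_ne_two : cbrt2 ≠ 2 := by
  intro h
  have hcube : cbrt2 ^ 3 = 2 := by
    rw [cbrt2, ← ofReal_pow, two_rpow_one_third_pow_three, ofReal_ofNat]
  norm_num [h] at hcube

lemma weierstrassP_ofReal_eq_one (hL : ∀ l, conj l ∈ L.lattice ↔ l ∈ L.lattice)
    (hg₂ : L.g₂ = 0) (hg₃ : L.g₃ = 1) {x : ℝ} (hx : (x : ℂ) ∉ L.lattice)
    (h3x : 3 * (x : ℂ) ∈ L.lattice) : ℘[L] x = 1 := by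
  have hpos := weierstrassP_ofReal_re_pos hL hg₂ (by simp [hg₃]) hx
  have hmul := weierstrassP_mul_of_three_mul_mem hx h3x hg₂
  rw [← weierstrassP_ofReal_re hL] at hmul ⊢
  have hcube := sub_eq_zero.mp ((mul_eq_zero.mp hmul).resolve_left (ofReal_ne_zero.mpr hpos.ne'))
  rw [hg₃] at hcube
  norm_cast at hcube ⊢
  exact (pow_eq_one_iff_of_nonneg hpos.le three_ne_zero).mp hcube

lemma derivWeierstrassP_ofReal_eq_neg_sqrt_three
    (hL : ∀ l, conj l ∈ L.lattice ↔ l ∈ L.lattice) (hg₂ : L.g₂ = 0) (hg₃ : L.g₃ = 1) {x y : ℝ}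
    (hxy : x < y) (hmem : ∀ t ∈ Set.Icc x y, (t : ℂ) ∉ L.lattice)
    (h3x : 3 * (x : ℂ) ∈ L.lattice) (h2y : 2 * (y : ℂ) ∈ L.lattice) :
    ℘'[L] x = -√3 := by
  have hx := hmem x (Set.left_mem_Icc.mpr hxy.le)
  have hneg : (℘'[L] x).re < 0 := by
    have h := strictMonoOn_derivWeierstrassP_re hL hg₂ (by simp [hg₃]) hmem
      (Set.left_mem_Icc.mpr hxy.le) (Set.right_mem_Icc.mpr hxy.le) hxy
    simpa only [derivWeierstrassP_of_two_mul_mem h2y, zero_re] using h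
  have hODE := L.derivWeierstrassP_sq x hx
  rw [weierstrassP_ofReal_eq_one hL hg₂ hg₃ hx h3x, hg₂, hg₃, ← derivWeierstrassP_ofReal_re hL]
    at hODE
  have hsq : (-(℘'[L] x).re) ^ 2 = 3 := by
    apply ofReal_injective
    push_cast
    linear_combination hODE
  rw [← derivWeierstrassP_ofReal_re hL, ← hsq, Real.sqrt_sq (neg_nonneg.mpr hneg.le), ofReal_neg,
    neg_neg]

lemma weierstrassP_ofReal_eq_cbrt2_div_two (hL : ∀ l, conj l ∈ L.lattice ↔ l ∈ L.lattice)
    (hg₂ : L.g₂ = 0) (hg₃ : L.g₃ = 1) {x : ℝ} (hx : (x : ℂ) ∉ L.lattice)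
    (h2x : 2 * (x : ℂ) ∈ L.lattice) : ℘[L] x = cbrt2 / 2 := by
  have hODE := L.derivWeierstrassP_sq x hx
  rw [derivWeierstrassP_of_two_mul_mem h2x, hg₂, hg₃, ← weierstrassP_ofReal_re hL] at hODE
  have hcube : (℘[L] x).re ^ 3 = ((2 : ℝ) ^ ((1 : ℝ) / 3) / 2) ^ 3 := by
    rw [div_pow, two_rpow_one_third_pow_three]
    apply ofReal_injective
    push_cast
    linear_combination -hODE / 4
  rw [← weierstrassP_ofReal_re hL, Odd.pow_injective (by decide : Odd 3) hcube, cbrt2, ofReal_div,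
    ofReal_ofNat]

lemma weierstrassZeta_div_six (hL : ∀ l, conj l ∈ L.lattice ↔ l ∈ L.lattice)
    (hg₂ : L.g₂ = 0) (hg₃ : L.g₃ = 1) {ω : ℝ} (hω : 0 < ω) (hω_mem : (ω : ℂ) ∈ L.lattice)
    (hmem : ∀ x ∈ Set.Ioo 0 ω, (x : ℂ) ∉ L.lattice) :
    weierstrassZeta L (ω / 6) = quasiPeriod L ω / 6 - 1 / √3 - √3 / (cbrt2 - 2) := by
  have h2mem : 2 * ((ω / 2 : ℝ) : ℂ) ∈ L.lattice := by
    rwa [ofReal_div, ofReal_ofNat, mul_div_cancel₀ _ two_ne_zero]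
  have h3mem : 3 * ((ω / 3 : ℝ) : ℂ) ∈ L.lattice := by
    rwa [ofReal_div, ofReal_ofNat, mul_div_cancel₀ _ three_ne_zero]
  have h2 := hmem (ω / 2) ⟨by linarith, by linarith⟩
  have h3 := hmem (ω / 3) ⟨by linarith, by linarith⟩
  have h6 := hmem (ω / 6) ⟨by linarith, by linarith⟩
  have hderiv := derivWeierstrassP_ofReal_eq_neg_sqrt_three hL hg₂ hg₃
    (by linarith : ω / 3 < ω / 2)
    (fun t ht ↦ hmem t ⟨by linarith [ht.1], by linarith [ht.2]⟩) h3mem h2mem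
  have hζ2 := weierstrassZeta_of_two_mul_mem h2 h2mem
  have hζ3 := quasiPeriod_sub_mul_derivWeierstrassP_of_three_mul_mem h3 h3mem
  have hsub : ((ω / 2 : ℝ) - (ω / 3 : ℝ) : ℂ) = (ω / 6 : ℝ) := by push_cast; ring
  have hζ6 := weierstrassZeta_subtraction h3 h2 (hsub ▸ h6)
  rw [hsub, weierstrassP_ofReal_eq_cbrt2_div_two hL hg₂ hg₃ h2 h2mem,
    derivWeierstrassP_of_two_mul_mem h2mem, hderiv] at hζ6
  rw [hderiv, hg₂] at hζ3
  rw [weierstrassP_ofReal_eq_one hL hg₂ hg₃ h3 h3mem] at hζ3 hζ6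
  push_cast at hζ2 hζ3 hζ6
  rw [mul_div_cancel₀ _ two_ne_zero] at hζ2
  rw [mul_div_cancel₀ _ three_ne_zero] at hζ3
  have hsqrt : (√3 : ℂ) ≠ 0 := by simp
  have hthird : weierstrassZeta L (ω / 3) = quasiPeriod L ω / 3 + 1 / √3 := by
    field_simp
    linear_combination hζ3 / 2
  have hdiff : weierstrassZeta L (ω / 6) - weierstrassZeta L (ω / 2) + weierstrassZeta L (ω / 3) =
      -√3 / (cbrt2 - 2) := by
    rw [eq_div_iff (sub_ne_zero.mpr cbrt2_ne_two)]
    linear_combination hζ6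
  linear_combination hdiff - hthird + hζ2 / 2

end Lattice

section Hexagonal

/-! ### The hexagonal lattice -/

lemma tau_re : tau.re = -1 / 2 := by simp [tau]

lemma tau_im : tau.im = √3 / 2 := by simp [tau]

lemma tau_sq : tau ^ 2 = -1 - tau := by
  rw [tau]
  linear_combination I ^ 2 / 4 * ofReal_sqrt_three_sq + 3 / 4 * I_sq

lemma conj_tau : conj tau = -1 - tau := by
  apply Complex.ext
  · rw [conj_re, sub_re, neg_re, one_re, tau_re]
    norm_num
  · simp

lemma tau_mem_Eis : tau ∈ Eis := tauO.2

lemma mem_Eis_iff {a : ℂ} : a ∈ Eis ↔ ∃ m n : ℤ, a = m + n * tau := by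
  constructor
  · intro ha
    induction ha using Subring.closure_induction with
    | mem x hx => exact ⟨0, 1, by simpa using hx⟩
    | zero => exact ⟨0, 0, by simp⟩
    | one => exact ⟨1, 0, by simp⟩
    | add x y _ _ hx hy =>
      obtain ⟨a, b, rfl⟩ := hx
      obtain ⟨c, d, rfl⟩ := hy
      exact ⟨a + c, b + d, by push_cast; ring⟩
    | neg x _ hx =>
      obtain ⟨a, b, rfl⟩ := hx
      exact ⟨-a, -b, by push_cast; ring⟩
    | mul x y _ _ hx hy =>
      obtain ⟨a, b, rfl⟩ := hx
      obtain ⟨c, d, rfl⟩ := hy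
      exact ⟨a * c - b * d, a * d + b * c - b * d, by
        push_cast; linear_combination (b * d : ℂ) * tau_sq⟩
  · rintro ⟨m, n, rfl⟩
    exact add_mem (intCast_mem _ _) (mul_mem (intCast_mem _ _) tau_mem_Eis)

lemma one_le_norm_of_mem_Eis {a : ℂ} (ha : a ∈ Eis) (ha0 : a ≠ 0) : 1 ≤ ‖a‖ := by
  obtain ⟨m, n, rfl⟩ := mem_Eis_iff.mp ha
  have hnorm : ‖(m + n * tau : ℂ)‖ ^ 2 = ((m ^ 2 - m * n + n ^ 2 : ℤ) : ℝ) := by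
    rw [← normSq_eq_norm_sq, normSq_apply]
    simp only [add_re, add_im, intCast_re, intCast_im, mul_re, mul_im, tau_re, tau_im]
    push_cast
    linear_combination (n ^ 2 / 4 : ℝ) * Real.sq_sqrt zero_le_three
  have hpos : 0 < m ^ 2 - m * n + n ^ 2 := by
    rw [← Int.cast_pos (R := ℝ), ← hnorm]
    positivity
  have hone : (1 : ℝ) ≤ ‖(m + n * tau : ℂ)‖ ^ 2 := hnorm ▸ mod_cast hpos
  exact (one_le_sq_iff₀ (norm_nonneg _)).mp hone

lemma one_add_tau_ne_zero : 1 + tau ≠ 0 :=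
  left_ne_zero_of_mul_eq_one (b := -tau) (by linear_combination -tau_sq)

lemma norm_one_add_tau : ‖1 + tau‖ = 1 := by
  have h : (1 + tau) ^ 6 = 1 := by
    linear_combination (tau ^ 4 + 5 * tau ^ 3 + 9 * tau ^ 2 + 6 * tau) * tau_sq
  exact norm_eq_one_of_pow_eq_one h (by norm_num)

/-- The period pair `(ω, ωτ)`, whose lattice is the hexagonal lattice `ω · ℤ[τ]`. -/
def hexagonal {ω : ℂ} (hω : ω ≠ 0) : PeriodPair where
  ω₁ := ω
  ω₂ := ω * tau
  indep := by
    rw [LinearIndependent.pair_iff]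
    intro s t h
    have hst : (s + t * tau : ℂ) = 0 := by
      apply mul_left_cancel₀ hω
      rw [real_smul, real_smul] at h
      linear_combination h
    have ht : t = 0 := by simpa [tau_im] using congrArg Complex.im hst
    exact ⟨by simpa [ht] using hst, ht⟩

variable {ω : ℂ} (hω : ω ≠ 0)

lemma mem_lattice_hexagonal {z : ℂ} :
    z ∈ (hexagonal hω).lattice ↔ ∃ a ∈ Eis, z = ω * a := by
  simp only [PeriodPair.mem_lattice, mem_Eis_iff, hexagonal]
  constructor
  · rintro ⟨m, n, rfl⟩
    exact ⟨m + n * tau, ⟨m, n, rfl⟩, by ring⟩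
  · rintro ⟨_, ⟨m, n, rfl⟩, rfl⟩
    exact ⟨m, n, by ring⟩

lemma self_mem_hexagonal : ω ∈ (hexagonal hω).lattice :=
  (mem_lattice_hexagonal hω).mpr ⟨1, one_mem Eis, (mul_one ω).symm⟩

lemma one_add_tau_mul_mem_hexagonal_iff (l : ℂ) :
    (1 + tau) * l ∈ (hexagonal hω).lattice ↔ l ∈ (hexagonal hω).lattice := by
  simp only [mem_lattice_hexagonal]
  constructor
  · rintro ⟨a, ha, h⟩
    exact ⟨-tau * a, mul_mem (neg_mem tau_mem_Eis) ha,
      by linear_combination l * tau_sq - tau * h⟩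
  · rintro ⟨a, ha, rfl⟩
    exact ⟨(1 + tau) * a, mul_mem (add_mem (one_mem _) tau_mem_Eis) ha, by ring⟩

lemma notMem_hexagonal_of_norm_lt {z : ℂ} (hz0 : z ≠ 0) (hz : ‖z‖ < ‖ω‖) :
    z ∉ (hexagonal hω).lattice := by
  rw [mem_lattice_hexagonal]
  rintro ⟨a, ha, rfl⟩
  have ha1 := one_le_norm_of_mem_Eis ha (right_ne_zero_of_mul hz0)
  rw [norm_mul] at hz
  exact hz.not_ge (le_mul_of_one_le_right (norm_nonneg ω) ha1)

lemma g₂_hexagonal : (hexagonal hω).g₂ = 0 := by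
  have hpow : (1 + tau) ^ 4 ≠ 1 := fun h ↦ by
    have him := congrArg Complex.im (show -1 - tau = 1 by
      linear_combination h - (tau ^ 2 + 3 * tau + 2) * tau_sq)
    simp [tau_im] at him
  rw [PeriodPair.g₂, G_eq_zero_of_pow_ne_one one_add_tau_ne_zero
    (one_add_tau_mul_mem_hexagonal_iff hω) hpow, mul_zero]

lemma conj_mem_hexagonal_iff (hω_real : conj ω = ω) (l : ℂ) :
    conj l ∈ (hexagonal hω).lattice ↔ l ∈ (hexagonal hω).lattice := by
  have hEis : ∀ a ∈ Eis, conj a ∈ Eis := fun a ha ↦ by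
    induction ha using Subring.closure_induction with
    | mem x hx =>
      rw [Set.mem_singleton_iff.mp hx, conj_tau]
      exact sub_mem (neg_mem (one_mem _)) tau_mem_Eis
    | zero => simp
    | one => simp
    | add x y _ _ hx hy => simpa using add_mem hx hy
    | neg x _ hx => simpa using hx
    | mul x y _ _ hx hy => simpa using mul_mem hx hy
  have hconj : ∀ z ∈ (hexagonal hω).lattice, conj z ∈ (hexagonal hω).lattice := fun z hz ↦ by
    obtain ⟨a, ha, rfl⟩ := (mem_lattice_hexagonal hω).mp hz
    exact (mem_lattice_hexagonal hω).mpr ⟨conj a, hEis a ha, by rw [map_mul, hω_real]⟩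
  exact ⟨fun h ↦ by simpa using hconj _ h, hconj l⟩

lemma inLattice_iff_mem_hexagonal {ω : ℝ} (hω : (ω : ℂ) ≠ 0) {z : ℂ} :
    inLattice ω z ↔ z ∈ (hexagonal hω).lattice := by
  rw [mem_lattice_hexagonal]
  exact ⟨fun ⟨a, h⟩ ↦ ⟨a, a.2, h⟩, fun ⟨a, ha, h⟩ ↦ ⟨⟨a, ha⟩, h⟩⟩

lemma tsum_inLattice {ω : ℝ} (hω : (ω : ℂ) ≠ 0) (f : ℂ → ℂ) :
    ∑' a : {w : ℂ // inLattice ω w ∧ w ≠ 0}, f a =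
      ∑' l : (hexagonal hω).lattice, if l.1 = 0 then 0 else f l.1 := by
  let incl : {w : ℂ // inLattice ω w ∧ w ≠ 0} → (hexagonal hω).lattice :=
    Subtype.map id fun _ hw ↦ (inLattice_iff_mem_hexagonal hω).mp hw.1
  have hincl : Function.Injective incl :=
    Subtype.map_injective _ Function.injective_id
  have hsupport : Function.support
      (fun l : (hexagonal hω).lattice ↦ if l.1 = 0 then 0 else f l.1) ⊆ Set.range incl := by
    intro l hl
    have hl0 : l.1 ≠ 0 := fun h0 ↦ hl (if_pos h0)
    exact ⟨⟨l, (inLattice_iff_mem_hexagonal hω).mpr l.2, hl0⟩, rfl⟩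
  rw [← hincl.tsum_eq hsupport]
  exact tsum_congr fun a ↦ (if_neg a.2.2).symm

lemma wzeta_eq_weierstrassZeta {ω : ℝ} (hω : (ω : ℂ) ≠ 0) :
    wzeta ω = weierstrassZeta (hexagonal hω) := by
  ext z
  rw [wzeta, tsum_inLattice hω fun a ↦ 1 / (z - a) + 1 / a + z / a ^ 2, weierstrassZeta,
    weierstrassZetaReg]

lemma wp_eq_weierstrassP {ω : ℝ} (hω : (ω : ℂ) ≠ 0) : wp ω = ℘[hexagonal hω] := by
  ext z
  rw [weierstrassP_eq_weierstrassPExcept_zero_add, add_comm, wp,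
    tsum_inLattice hω fun a ↦ 1 / (z - a) ^ 2 - 1 / a ^ 2, PeriodPair.weierstrassPExcept]

lemma g₃_hexagonal_eq_one {ω : ℝ} (hω : (ω : ℂ) ≠ 0)
    (hODE : ∀ z : ℂ, ¬ inLattice ω z → deriv (wp ω) z ^ 2 = 4 * wp ω z ^ 3 - 1) :
    (hexagonal hω).g₃ = 1 := by
  have hz : (ω / 2 : ℂ) ∉ (hexagonal hω).lattice :=
    notMem_hexagonal_of_norm_lt hω (div_ne_zero hω two_ne_zero) <| by
      simpa using norm_pos_iff.mpr hω
  have h := hODE _ ((inLattice_iff_mem_hexagonal hω).not.mpr hz)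
  rw [wp_eq_weierstrassP hω, PeriodPair.deriv_weierstrassP,
    (hexagonal hω).derivWeierstrassP_sq _ hz, g₂_hexagonal hω] at h
  linear_combination -h

/-! ### Legendre's relation for the hexagonal lattice -/

lemma eq_of_hasDerivAt_zero {f : ℂ → ℂ} {r : ℝ} (hf : ∀ z ∈ Metric.ball 0 r, HasDerivAt f 0 z)
    {z : ℂ} (hz : z ∈ Metric.ball 0 r) : f z = f 0 :=
  Metric.isOpen_ball.is_const_of_deriv_eq_zero (convex_ball 0 r).isPreconnected
    (fun x hx ↦ (hf x hx).differentiableAt.differentiableWithinAt) (fun x hx ↦ (hf x hx).deriv)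
    hz (Metric.mem_ball_self (Metric.pos_of_mem_ball hz))

lemma weierstrassZeta_half_add {L : PeriodPair} {l s : ℂ} (hl : l ∈ L.lattice)
    (hs : l / 2 - s ∉ L.lattice) :
    weierstrassZeta L (l / 2 + s) = quasiPeriod L l - weierstrassZeta L (l / 2 - s) := by
  have h := weierstrassZeta_add hl (neg_mem_iff.not.mpr hs)
  rw [weierstrassZeta_neg, show -(l / 2 - s) + l = l / 2 + s by ring] at h
  linear_combination h

lemma sub_eq_quasiPeriod_mul_of_hasDerivAt {L : PeriodPair} {l : ℂ} (hl : l ∈ L.lattice)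
    {F : ℂ → ℂ} {r : ℝ} (hmem : ∀ s ∈ Metric.ball 0 r, l / 2 + s ∉ L.lattice)
    (hF : ∀ s ∈ Metric.ball 0 r, HasDerivAt F (weierstrassZeta L (l / 2 + s)) s)
    {s : ℂ} (hs : s ∈ Metric.ball 0 r) : F s - F (-s) = quasiPeriod L l * s := by
  have hneg : ∀ x ∈ Metric.ball (0 : ℂ) r, -x ∈ Metric.ball (0 : ℂ) r := fun x hx ↦ by
    simpa using hx
  have hderiv : ∀ x ∈ Metric.ball 0 r,
      HasDerivAt (fun x ↦ F x - F (-x) - quasiPeriod L l * x) 0 x := fun x hx ↦ by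
    have hFneg := (hF (-x) (hneg x hx)).comp x (hasDerivAt_neg x)
    refine (((hF x hx).sub hFneg).sub
      ((hasDerivAt_id x).const_mul (quasiPeriod L l))).congr_deriv ?_
    have hx' := hmem (-x) (hneg x hx)
    rw [← sub_eq_add_neg] at hx' ⊢
    rw [weierstrassZeta_half_add hl hx']
    ring
  have h := eq_of_hasDerivAt_zero hderiv hs
  simp only [neg_zero, sub_self, mul_zero] at h
  linear_combination h

lemma comp_mul_eq_of_hasDerivAt {g G : ℂ → ℂ} {ε : ℂ} {r : ℝ} (hε : ‖ε‖ = 1)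
    (hG : ∀ z ∈ Metric.ball 0 r, HasDerivAt G (g z) z)
    (hg : ∀ z ∈ Metric.ball 0 r, g (ε * z) = ε⁻¹ * g z)
    {z : ℂ} (hz : z ∈ Metric.ball 0 r) : G (ε * z) = G z := by
  have hε0 : ε ≠ 0 := norm_ne_zero_iff.mp (hε ▸ one_ne_zero)
  have hderiv : ∀ x ∈ Metric.ball 0 r, HasDerivAt (fun x ↦ G (ε * x) - G x) 0 x := fun x hx ↦ by
    have hεx : ε * x ∈ Metric.ball 0 r := by simpa [hε] using hx
    have hcomp := (hG _ hεx).comp x ((hasDerivAt_id x).const_mul ε)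
    refine (hcomp.sub (hG x hx)).congr_deriv ?_
    rw [hg x hx, mul_one, mul_right_comm, inv_mul_cancel₀ hε0, one_mul, sub_self]
  have h := eq_of_hasDerivAt_zero hderiv hz
  simp only [mul_zero, sub_self] at h
  exact sub_eq_zero.mp h

lemma log_half_add_sub_log_half_sub :
    log (1 / 2 + √3 / 6 * I) - log (1 / 2 - √3 / 6 * I) = π / 3 * I := by
  have hpolar : (1 / 2 + √3 / 6 * I : ℂ) =
      (1 / √3 : ℝ) * (Complex.cos (π / 6 : ℝ) + Complex.sin (π / 6 : ℝ) * I) := by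
    rw [← ofReal_cos, ← ofReal_sin, Real.cos_pi_div_six, Real.sin_pi_div_six]
    have h3 : (√3 : ℂ) ≠ 0 := by simp
    push_cast
    field_simp
    linear_combination 2 * I * ofReal_sqrt_three_sq
  have harg : (1 / 2 + √3 / 6 * I : ℂ).arg = π / 6 := by
    rw [hpolar]
    exact arg_mul_cos_add_sin_mul_I (by positivity) ⟨by linarith [pi_pos], by linarith [pi_pos]⟩
  have hconj : (1 / 2 - √3 / 6 * I : ℂ) = conj (1 / 2 + √3 / 6 * I : ℂ) := by
    simp [sub_eq_add_neg, map_ofNat]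
  rw [hconj, log_conj _ (by rw [harg]; linarith [pi_pos]), sub_conj, log_im, harg]
  push_cast
  ring

lemma exists_hasDerivAt_weierstrassZetaReg_hexagonal : ∃ G : ℂ → ℂ,
    (∀ z ∈ Metric.ball 0 ‖ω‖, HasDerivAt G (weierstrassZetaReg (hexagonal hω) z) z) ∧
      ∀ z ∈ Metric.ball 0 ‖ω‖, G ((1 + tau) * z) = G z := by
  have hdiff : DifferentiableOn ℂ (weierstrassZetaReg (hexagonal hω)) (Metric.ball 0 ‖ω‖) :=
    fun z hz ↦ (hasDerivAt_weierstrassZetaReg fun h ↦ notMem_hexagonal_of_norm_lt hω h.2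
      (mem_ball_zero_iff.mp hz) h.1).differentiableAt.differentiableWithinAt
  obtain ⟨G, hG⟩ := hdiff.isExactOn_ball
  have hrot := weierstrassZetaReg_mul one_add_tau_ne_zero (one_add_tau_mul_mem_hexagonal_iff hω)
  exact ⟨G, hG, fun z hz ↦ comp_mul_eq_of_hasDerivAt norm_one_add_tau hG (fun x _ ↦ hrot x) hz⟩

lemma norm_half_add_lt {s : ℂ} (hs : s ∈ Metric.ball 0 (‖ω‖ / 2)) : ‖ω / 2 + s‖ < ‖ω‖ := by
  have hadd := norm_add_le (ω / 2) s
  rw [norm_div, Complex.norm_ofNat] at hadd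
  linarith [mem_ball_zero_iff.mp hs]

lemma half_add_div_re_pos {s : ℂ} (hs : s ∈ Metric.ball 0 (‖ω‖ / 2)) :
    0 < (1 / 2 + s / ω).re := by
  have hω0 : 0 < ‖ω‖ := by linarith [Metric.pos_of_mem_ball hs]
  have hnorm : ‖s / ω‖ < 1 / 2 := by
    rw [norm_div, div_lt_iff₀ hω0]
    linarith [mem_ball_zero_iff.mp hs]
  have habs := (abs_re_le_norm (s / ω)).trans_lt hnorm
  rw [add_re, show ((1 / 2 : ℂ)).re = 1 / 2 by norm_num]
  linarith [(abs_lt.mp habs).1]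

lemma half_add_ne_zero {s : ℂ} (hs : s ∈ Metric.ball 0 (‖ω‖ / 2)) : ω / 2 + s ≠ 0 := by
  intro h
  have hnorm := congrArg norm (eq_neg_of_add_eq_zero_left h)
  rw [norm_div, Complex.norm_ofNat, norm_neg] at hnorm
  exact (mem_ball_zero_iff.mp hs).ne' hnorm

lemma hasDerivAt_weierstrassZeta_primitive {L : PeriodPair} {G : ℂ → ℂ}
    (hG : ∀ z ∈ Metric.ball 0 ‖ω‖, HasDerivAt G (weierstrassZetaReg L z) z)
    {s : ℂ} (hs : s ∈ Metric.ball 0 (‖ω‖ / 2)) :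
    HasDerivAt (fun s ↦ G (ω / 2 + s) + log (1 / 2 + s / ω))
      (weierstrassZeta L (ω / 2 + s)) s := by
  have hω : ω ≠ 0 := norm_pos_iff.mp (by linarith [Metric.pos_of_mem_ball hs])
  have hGs := (hG _ (mem_ball_zero_iff.mpr (norm_half_add_lt hs))).comp_const_add (ω / 2) s
  have hlog := (((hasDerivAt_id s).div_const ω).const_add (1 / 2)).clog
    (Or.inl (half_add_div_re_pos hs))
  refine (hGs.add hlog).congr_deriv ?_
  rw [weierstrassZeta, add_comm, id_eq, div_div, mul_add, mul_div_cancel₀ s hω, mul_one_div]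

lemma quasiPeriod_hexagonal : quasiPeriod (hexagonal hω) ω = 2 * π / (√3 * ω) := by
  obtain ⟨G, hG, hGrot⟩ := exists_hasDerivAt_weierstrassZetaReg_hexagonal hω
  -- `ω / 2 ± y` are adjacent vertices of the Voronoi cell of the origin.
  obtain ⟨y, hy⟩ : ∃ y, y = ω * (√3 / 6 * I) := ⟨_, rfl⟩
  have hyω : y / ω = √3 / 6 * I := by rw [hy, mul_div_cancel_left₀ _ hω]
  have hy_mem : y ∈ Metric.ball 0 (‖ω‖ / 2) := by
    have h3 : √3 < 2 := by rw [Real.sqrt_lt] <;> norm_num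
    have hpos := norm_pos_iff.mpr hω
    rw [hy, mem_ball_zero_iff, norm_mul, norm_mul, norm_I, norm_div, norm_real,
      Complex.norm_ofNat, Real.norm_of_nonneg (Real.sqrt_nonneg 3)]
    nlinarith
  have hquasi := sub_eq_quasiPeriod_mul_of_hasDerivAt (self_mem_hexagonal hω) (fun s hs ↦
    notMem_hexagonal_of_norm_lt hω (half_add_ne_zero hs) (norm_half_add_lt hs))
    (fun s hs ↦ hasDerivAt_weierstrassZeta_primitive hG hs) hy_mem
  have hrot : (1 + tau) * (ω / 2 + -y) = ω / 2 + y := by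
    rw [hy, tau]
    linear_combination -ω / 12 * I ^ 2 * ofReal_sqrt_three_sq - ω / 4 * I_sq
  have hG_eq := hGrot (ω / 2 + -y) (mem_ball_zero_iff.mpr
    (norm_half_add_lt (by simpa only [mem_ball_zero_iff, norm_neg] using hy_mem)))
  rw [hrot] at hG_eq
  rw [hG_eq, neg_div, hyω, ← sub_eq_add_neg (1 / 2 : ℂ), add_sub_add_left_eq_sub,
    log_half_add_sub_log_half_sub, hy] at hquasi
  rw [eq_div_iff (mul_ne_zero (by simp) hω)]
  apply mul_right_cancel₀ I_ne_zero
  linear_combination -6 * hquasi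

end Hexagonal

end

/-- From [Qiu], (2.9): `ζ(ω/6) = π/(3√3·ω) − 1/√3 − √3/(∛2 − 2)`.
Here `ω > 0` is pinned down by the differential equation `℘′² = 4℘³ − 1` for the
lattice `L_ω = ω·ℤ[τ]` (equivalently, the lattice invariants are `g₂ = 0`, `g₃ = 1`). -/
theorem wzeta_value_at_one_sixth
    (ω : ℝ) (hω : 0 < ω)
    (hODE : ∀ z : ℂ, ¬ inLattice ω z → deriv (wp ω) z ^ 2 = 4 * wp ω z ^ 3 - 1) :
    wzeta ω ((ω : ℂ) / 6) =
      (Real.pi : ℂ) / (3 * (Real.sqrt 3 : ℂ) * (ω : ℂ)) - 1 / (Real.sqrt 3 : ℂ) -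
        (Real.sqrt 3 : ℂ) / (cbrt2 - 2) := by
  have hω' : (ω : ℂ) ≠ 0 := ofReal_ne_zero.mpr hω.ne'
  have hmem : (ω : ℂ) ∈ (hexagonal hω').lattice := self_mem_hexagonal hω'
  have hnotMem : ∀ x ∈ Set.Ioo 0 ω, (x : ℂ) ∉ (hexagonal hω').lattice := fun x hx ↦
    notMem_hexagonal_of_norm_lt hω' (ofReal_ne_zero.mpr hx.1.ne') <| by
      simpa [abs_of_pos hx.1, abs_of_pos hω] using hx.2
  rw [wzeta_eq_weierstrassZeta hω',
    weierstrassZeta_div_six (conj_mem_hexagonal_iff hω' (conj_ofReal ω)) (g₂_hexagonal hω')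
      (g₃_hexagonal_eq_one hω' hODE) hω hmem hnotMem,
    quasiPeriod_hexagonal hω']
  ring
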